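/- arXiv:2006.07670 — 2 statements merged into one kernel-verified Lean document; each statement's English description precedes it below -/
import Mathlib

section
/- (Proposition 2.1, Fokker–Planck equation.) Let θ be a solution of the nonlinear equation for the labeled graphon W with data (U, θ₀, B) as below, let μ̄_t = Law(θ_t) and let μ^x_t be a regular conditional distribution of θ_t given U = x. Then μ̄ solves the graphon-weighted nonlinear Fokker–Planck equation weakly: for every twice continuously differentiable f : 𝕋 → ℝ and every t ∈ [0,T], ∫_𝕋 f dμ̄_t − ∫_𝕋 f dμ̄₀ = ∫₀ᵗ [ ∫_𝕋 ( ½ f''(θ) + f'(θ) F(θ) ) μ̄_s(dθ) + ∫_{I×I} W(x,y) ( ∫_𝕋 ∫_𝕋 f'(θ) Γ(θ, u) μ^y_s(du) μ^x_s(dθ) ) dy dx ] ds. -/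
open MeasureTheory ProbabilityTheory Real Set Filter Topology

noncomputable section

/-- The one-dimensional torus `𝕋 = ℝ/(2πℤ)`. -/
abbrev Torus : Type := AddCircle (2 * Real.pi)

instance : Fact (0 < 2 * Real.pi) := ⟨by positivity⟩

/-- The label space `I = [0,1]`. -/
abbrev I01 : Set ℝ := Set.Icc (0:ℝ) 1

/-- `F` is bounded and Lipschitz. -/
def BddLip (F : Torus → ℝ) : Prop :=
  (∃ K : NNReal, LipschitzWith K F) ∧ ∃ M : ℝ, ∀ a, |F a| ≤ M

/-- `Γ` is bounded and Lipschitz (jointly on `𝕋 × 𝕋`). -/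
def BddLip2 (Γ : Torus → Torus → ℝ) : Prop :=
  (∃ K : NNReal, LipschitzWith K (fun p : Torus × Torus => Γ p.1 p.2)) ∧
    ∃ M : ℝ, ∀ a b, |Γ a b| ≤ M

/-- A labeled graphon: a symmetric measurable function `I² → [0,1]`. -/
def IsGraphon (W : ℝ → ℝ → ℝ) : Prop :=
  Measurable (fun p : ℝ × ℝ => W p.1 p.2) ∧ (∀ x y, W x y ∈ Set.Icc (0:ℝ) 1) ∧
    ∀ x y, W x y = W y x

/-- A standard Brownian motion on `[0,T]`: a continuous real-valued process starting at `0`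
whose increment `B_t − B_s` is Gaussian of mean `0` and variance `t − s` and is independent
of the past `(B_r)_{r ≤ s}`. -/
def IsStandardBM {Ω : Type*} [MeasurableSpace Ω] (T : ℝ) (P : Measure Ω)
    (B : Ω → ℝ → ℝ) : Prop :=
  (∀ ω, B ω 0 = 0) ∧ (∀ ω, ContinuousOn (B ω) (Set.Icc 0 T)) ∧
  (∀ s : ℝ, Measurable (fun ω => B ω s)) ∧
  (∀ s t : ℝ, 0 ≤ s → s ≤ t → t ≤ T →
    P.map (fun ω => B ω t - B ω s) = ProbabilityTheory.gaussianReal 0 (Real.toNNReal (t - s)) ∧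
    ProbabilityTheory.IndepFun (fun ω => B ω t - B ω s)
      (fun ω => (fun r : Set.Icc (0:ℝ) s => B ω r)) P)

/-- The integrated drift
`∫₀ᵗ F(p_s) ds + ∫₀ᵗ ∫_I W(x,y) ( ∫_𝕋 Γ(p_s, u) μ^y_s(du) ) dy ds`. -/
def drift (F : Torus → ℝ) (Γ : Torus → Torus → ℝ) (W : ℝ → ℝ → ℝ)
    (μ : ℝ → ℝ → Measure Torus) (x : ℝ) (p : ℝ → Torus) (t : ℝ) : ℝ :=
  (∫ s in Set.Icc 0 t, F (p s)) +
  ∫ s in Set.Icc 0 t, ∫ y in I01, W x y * ∫ u, Γ (p s) u ∂(μ y s)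

/-- The data `(U, θ0, B)` of the nonlinear equation: `U` uniform on `I`, `θ0` with law
`μ0`, `B` a standard Brownian motion, the three mutually independent. -/
def MeanFieldData {Ω : Type*} [MeasurableSpace Ω] (T : ℝ) (P : Measure Ω)
    (μ0 : Measure Torus) (U : Ω → ℝ) (θ0 : Ω → Torus) (B : Ω → ℝ → ℝ) : Prop :=
  Measurable U ∧ P.map U = volume.restrict I01 ∧
  Measurable θ0 ∧ P.map θ0 = μ0 ∧
  IsStandardBM T P B ∧
  ProbabilityTheory.IndepFun U θ0 P ∧
  ProbabilityTheory.IndepFun (fun ω => (U ω, θ0 ω)) (fun ω => B ω) P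

/-- A continuous `𝕋`-valued process `θ` is a solution of the nonlinear equation for the
labeled graphon `W` with data `(U, θ0, B)` if, `P`-a.s., for all `t ∈ [0,T]`,
`θ_t = θ0 + π( ∫₀ᵗ F(θ_s) ds + ∫₀ᵗ ∫_I W(U,y) (∫_𝕋 Γ(θ_s,u) μ^y_s(du)) dy ds + B_t )`,
where `μ^y_s` (here the kernel `μker y s`) is a regular conditional distribution of `θ_s`
given `U = y`. -/
structure IsMeanFieldSolution {Ω : Type*} [MeasurableSpace Ω] (T : ℝ) (P : Measure Ω)
    (F : Torus → ℝ) (Γ : Torus → Torus → ℝ) (W : ℝ → ℝ → ℝ)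
    (U : Ω → ℝ) (θ0 : Ω → Torus) (B : Ω → ℝ → ℝ)
    (θ : Ω → ℝ → Torus) (μker : ℝ → ℝ → Measure Torus) : Prop where
  meas : ∀ s : ℝ, Measurable (fun ω => θ ω s)
  cont : ∀ ω, ContinuousOn (θ ω) (Set.Icc 0 T)
  kerMeas : ∀ s : ℝ, Measurable (fun y => μker y s)
  kerProb : ∀ y s, IsProbabilityMeasure (μker y s)
  disint : ∀ s ∈ Set.Icc (0:ℝ) T, ∀ S : Set ℝ, MeasurableSet S →
    ∀ A : Set Torus, MeasurableSet A →
      P {ω | U ω ∈ S ∧ θ ω s ∈ A} = ∫⁻ y in S ∩ I01, μker y s A ∂volume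
  sde : ∀ᵐ ω ∂P, ∀ t ∈ Set.Icc (0:ℝ) T,
    θ ω t = θ0 ω + ((drift F Γ W μker (U ω) (θ ω) t + B ω t : ℝ) : Torus)

/-!
For a `C²` function `f` the map `s ↦ E f(θ_s)` is continuous, and its right derivative is continuous
and equal to the integrand of the Fokker–Planck equation, so the equation is the fundamental theorem
of calculus. To differentiate, compare `θ_t` with the frozen point `θ_s + π(B_t - B_s)`. Moving from
`θ_s` to the frozen point amounts to applying the heat semigroup to `f`, because `θ_s` is
independent of `B_t - B_s`; this produces `½ f''`. Moving on to `θ_t` shifts by `∫ₛᵗ` of the drift,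
which produces `f'` times the drift by differentiability and dominated convergence.

No filtration is given, so the independence of `θ_s` and `B_t - B_s` has to be extracted from the
equation: its drift is Lipschitz in the state, hence `θ_s` is almost surely the limit of Euler
schemes, which read only `U`, `θ₀` and the noise up to time `s`. Disintegrating along `U` and Fubini
turn the expected drift into its graphon form.
-/

/-! ### Differential calculus on the circle -/

/-- `f'` is the derivative of `f` on the circle `ℝ / pℤ`, expressed through the `p`-periodic lifts
of `f` and `f'` to `ℝ`. -/
def HasCircleDeriv {p : ℝ} (f f' : AddCircle p → ℝ) : Prop :=
  ∀ r : ℝ, HasDerivAt (fun s : ℝ => f s) (f' r) r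

namespace HasCircleDeriv

variable {p : ℝ} {f f' f'' : AddCircle p → ℝ} {M : ℝ}

lemma hasDerivAt_add (hf : HasCircleDeriv f f') (v : AddCircle p) (y : ℝ) :
    HasDerivAt (fun y : ℝ => f (v + y)) (f' (v + y)) y := by
  obtain ⟨r, rfl⟩ := QuotientAddGroup.mk_surjective v
  simpa using (hf (r + y)).comp_const_add r y

lemma continuous (hf : HasCircleDeriv f f') : Continuous f :=
  isQuotientMap_quotient_mk'.continuous_iff.2 <|
    continuous_iff_continuousAt.2 fun r => (hf r).continuousAt

lemma hasStrictDerivAt_add (hf : HasCircleDeriv f f') (hf' : Continuous f') (v : AddCircle p)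
    (y : ℝ) : HasStrictDerivAt (fun y : ℝ => f (v + y)) (f' (v + y)) y :=
  hasStrictDerivAt_of_hasDerivAt_of_continuousAt (f' := fun y : ℝ => f' (v + y))
    (.of_forall (hf.hasDerivAt_add v)) (by fun_prop)

lemma abs_add_sub_le (hf : HasCircleDeriv f f') (hM : ∀ v, |f' v| ≤ M) (v : AddCircle p) (y : ℝ) :
    |f (v + y) - f v| ≤ M * |y| := by
  simpa using convex_univ.norm_image_sub_le_of_norm_hasDerivWithin_le (x := 0)
    (fun y _ => (hf.hasDerivAt_add v y).hasDerivWithinAt) (fun _ _ => hM _) trivial (mem_univ y)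

lemma hasDerivAt_taylor_remainder (hf : HasCircleDeriv f f') (v : AddCircle p) (y : ℝ) :
    HasDerivAt (fun y : ℝ => f (v + y) - f v - y * f' v) (f' (v + y) - f' v) y :=
  (((hf.hasDerivAt_add v y).sub_const (f v)).sub
    ((hasDerivAt_id y).mul_const (f' v))).congr_deriv (by simp)

lemma abs_taylor_remainder_le (hf : HasCircleDeriv f f') (hf' : HasCircleDeriv f' f'')
    (hM : ∀ v, |f'' v| ≤ M) (v : AddCircle p) (y : ℝ) :
    |f (v + y) - f v - y * f' v| ≤ M * y ^ 2 := by
  have hM0 : 0 ≤ M := (abs_nonneg _).trans (hM v)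
  have hderiv : ∀ z ∈ Metric.closedBall (0 : ℝ) |y|, ‖f' (v + z) - f' v‖ ≤ M * |y| := fun z hz =>
    (hf'.abs_add_sub_le hM v z).trans
      (mul_le_mul_of_nonneg_left (by simpa using hz) hM0)
  have hmvt := (convex_closedBall (0 : ℝ) |y|).norm_image_sub_le_of_norm_hasDerivWithin_le
    (fun z _ => (hf.hasDerivAt_taylor_remainder v z).hasDerivWithinAt) hderiv
    (Metric.mem_closedBall_self (abs_nonneg y)) (by simp : y ∈ _)
  simpa [mul_assoc, ← sq] using hmvt

lemma taylor_isLittleO (hf : HasCircleDeriv f f') (hf' : HasCircleDeriv f' f'')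
    (v : AddCircle p) :
    (fun y : ℝ => f (v + y) - f v - y * f' v - 1 / 2 * f'' v * y ^ 2) =o[𝓝 0] fun y => y ^ 2 := by
  have hderiv : ∀ y : ℝ, HasDerivAt
      (fun y : ℝ => f (v + y) - f v - y * f' v - 1 / 2 * f'' v * y ^ 2)
      (f' (v + y) - f' v - y * f'' v) y := fun y =>
    ((hf.hasDerivAt_taylor_remainder v y).sub
      ((hasDerivAt_pow 2 y).const_mul (1 / 2 * f'' v))).congr_deriv (by push_cast; ring)
  have hfirst :
      (fun y : ℝ => f' (v + y) - f' v - y * f'' v) =o[𝓝[univ] 0] fun y => (y - 0) ^ 1 := by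
    simpa [hasDerivAt_iff_isLittleO] using hf'.hasDerivAt_add v 0
  simpa using convex_univ.isLittleO_pow_succ_real (mem_univ 0)
    (fun y _ => (hderiv y).hasDerivWithinAt) hfirst

end HasCircleDeriv

lemma exists_abs_le_of_continuous {X : Type*} [TopologicalSpace X] [CompactSpace X] {f : X → ℝ}
    (hf : Continuous f) : ∃ M, ∀ x, |f x| ≤ M := by
  simpa using isCompact_univ.exists_bound_of_continuousOn hf.continuousOn

lemma integrable_comp_of_continuous {X Ω : Type*} [TopologicalSpace X] [CompactSpace X]
    [MeasurableSpace X] [OpensMeasurableSpace X] [MeasurableSpace Ω] {P : Measure Ω}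
    [IsFiniteMeasure P] {f : X → ℝ} (hf : Continuous f) {Y : Ω → X} (hY : Measurable Y) :
    Integrable (fun ω => f (Y ω)) P :=
  have ⟨M, hM⟩ := exists_abs_le_of_continuous hf
  .of_bound (hf.measurable.comp hY).aestronglyMeasurable M (ae_of_all _ fun _ => hM _)

/-! ### The heat semigroup of the circle -/

lemma integrable_id_gaussianReal (m : ℝ) (v : NNReal) :
    Integrable (fun z => z) (gaussianReal m v) :=
  memLp_one_iff_integrable.1 (memLp_id_gaussianReal 1)

lemma integrable_sq_gaussianReal (m : ℝ) (v : NNReal) :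
    Integrable (fun z => z ^ 2) (gaussianReal m v) :=
  (memLp_id_gaussianReal 2).integrable_sq

lemma integral_sq_gaussianReal_zero (v : NNReal) : ∫ z, z ^ 2 ∂gaussianReal 0 v = v := by
  rw [← variance_id_gaussianReal (μ := 0) (v := v),
    variance_of_integral_eq_zero aemeasurable_id (by simp)]
  rfl

lemma gaussianReal_eq_map_sqrt_mul (h : ℝ) :
    gaussianReal 0 h.toNNReal = (gaussianReal 0 1).map (√h * ·) := by
  rw [gaussianReal_map_const_mul]
  congr 1
  · simp
  · ext
    rcases le_total 0 h with hh | hh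
    · simp [Real.sq_sqrt, hh]
    · simp [Real.sqrt_eq_zero_of_nonpos, Real.toNNReal_of_nonpos, hh]

/-- The heat semigroup of the circle at time `h`, for the generator `½ d²/dv²`: the average of `f`
at a Gaussian displacement of variance `h`. The displacement is written `√h z` with `z` standard
Gaussian so that all times share one measure. -/
def heatSemigroup {p : ℝ} (h : ℝ) (f : AddCircle p → ℝ) (v : AddCircle p) : ℝ :=
  ∫ z, f (v + (√h * z : ℝ)) ∂gaussianReal 0 1

section heatSemigroup

variable {p : ℝ} {f f' f'' : AddCircle p → ℝ} {M h : ℝ}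

lemma tendsto_taylor_remainder_sqrt_div (hf : HasCircleDeriv f f') (hf' : HasCircleDeriv f' f'')
    (v : AddCircle p) (z : ℝ) :
    Tendsto (fun h : ℝ => (f (v + (√h * z : ℝ)) - f v - √h * z * f' v) / h) (𝓝[>] 0)
      (𝓝 (1 / 2 * f'' v * z ^ 2)) := by
  have hz : Tendsto (fun h : ℝ => √h * z) (𝓝[>] 0) (𝓝 0) :=
    (Continuous.tendsto' (by fun_prop) 0 0 (by simp)).mono_left nhdsWithin_le_nhds
  have hsq : ∀ᶠ h : ℝ in 𝓝[>] 0, (√h * z) ^ 2 = h * z ^ 2 := by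
    filter_upwards [self_mem_nhdsWithin] with h hh
    rw [mul_pow, Real.sq_sqrt (le_of_lt hh)]
  have hbig : (fun h : ℝ => (√h * z) ^ 2) =O[𝓝[>] 0] fun h => h :=
    (Asymptotics.isBigO_const_mul_self (z ^ 2) _ _).congr'
      (hsq.mono fun h hh => (mul_comm _ _).trans hh.symm) .rfl
  have hlim := (((hf.taylor_isLittleO hf' v).comp_tendsto hz).trans_isBigO
    hbig).tendsto_div_nhds_zero.add_const (1 / 2 * f'' v * z ^ 2)
  rw [zero_add] at hlim
  refine hlim.congr' ?_
  filter_upwards [hsq, self_mem_nhdsWithin] with h hh (hpos : 0 < h)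
  simp only [Function.comp_apply, hh]
  field_simp
  ring

variable [Fact (0 < p)]

lemma continuous_heatSemigroup (h : ℝ) (hf : Continuous f) : Continuous (heatSemigroup h f) := by
  obtain ⟨M, hM⟩ := exists_abs_le_of_continuous hf
  exact continuous_of_dominated (bound := fun _ => M)
    (fun v => Continuous.aestronglyMeasurable (by fun_prop)) (fun v => ae_of_all _ fun z => hM _)
    (integrable_const M) (ae_of_all _ fun z => by fun_prop)

lemma heatSemigroup_sub_eq_integral (hf : HasCircleDeriv f f') (h : ℝ) (v : AddCircle p) :
    heatSemigroup h f v - f v =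
      ∫ z, (f (v + (√h * z : ℝ)) - f v - √h * z * f' v) ∂gaussianReal 0 1 := by
  have hint : Integrable (fun z : ℝ => f (v + (√h * z : ℝ))) (gaussianReal 0 1) :=
    integrable_comp_of_continuous hf.continuous (by fun_prop)
  have hlin : Integrable (fun z : ℝ => √h * z * f' v) (gaussianReal 0 1) :=
    ((integrable_id_gaussianReal 0 1).const_mul _).mul_const _
  have hdiff : Integrable (fun z : ℝ => f (v + (√h * z : ℝ)) - f v) (gaussianReal 0 1) :=
    hint.sub (integrable_const _)
  rw [integral_sub hdiff hlin, integral_sub hint (integrable_const _), integral_mul_const,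
    integral_const_mul, integral_id_gaussianReal]
  simp [heatSemigroup]

lemma abs_heatSemigroup_sub_le (hf : HasCircleDeriv f f') (hf' : HasCircleDeriv f' f'')
    (hM : ∀ v, |f'' v| ≤ M) (hh : 0 ≤ h) (v : AddCircle p) :
    |heatSemigroup h f v - f v| ≤ M * h := by
  rw [heatSemigroup_sub_eq_integral hf]
  calc |∫ z, (f (v + (√h * z : ℝ)) - f v - √h * z * f' v) ∂gaussianReal 0 1|
      ≤ ∫ z, M * h * z ^ 2 ∂gaussianReal 0 1 := by
        refine norm_integral_le_of_norm_le
          (f := fun z : ℝ => f (v + (√h * z : ℝ)) - f v - √h * z * f' v)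
          ((integrable_sq_gaussianReal 0 1).const_mul _) (ae_of_all _ fun z => ?_)
        simpa [mul_pow, Real.sq_sqrt hh, mul_assoc] using
          hf.abs_taylor_remainder_le hf' hM v (√h * z)
    _ = M * h := by rw [integral_const_mul, integral_sq_gaussianReal_zero]; simp

lemma tendsto_heatSemigroup_sub_div (hf : HasCircleDeriv f f') (hf' : HasCircleDeriv f' f'')
    (hM : ∀ v, |f'' v| ≤ M) (v : AddCircle p) :
    Tendsto (fun h => (heatSemigroup h f v - f v) / h) (𝓝[>] 0) (𝓝 (1 / 2 * f'' v)) := by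
  have hlim : ∫ z, 1 / 2 * f'' v * z ^ 2 ∂gaussianReal 0 1 = 1 / 2 * f'' v := by
    rw [integral_const_mul, integral_sq_gaussianReal_zero]; simp
  simp_rw [heatSemigroup_sub_eq_integral hf, ← integral_div]
  rw [← hlim]
  have hf_cont := hf.continuous
  refine tendsto_integral_filter_of_dominated_convergence (fun z => M * z ^ 2)
    (.of_forall fun h => ?_) ?_ ((integrable_sq_gaussianReal 0 1).const_mul M)
    (ae_of_all _ fun z => tendsto_taylor_remainder_sqrt_div hf hf' v z)
  · exact Continuous.aestronglyMeasurable (by fun_prop)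
  · filter_upwards [self_mem_nhdsWithin] with h (hh : 0 < h)
    refine ae_of_all _ fun z => ?_
    rw [Real.norm_eq_abs, abs_div, abs_of_pos hh, div_le_iff₀ hh]
    refine (hf.abs_taylor_remainder_le hf' hM v (√h * z)).trans_eq ?_
    rw [mul_pow, Real.sq_sqrt hh.le]
    ring

lemma integral_comp_add_eq_integral_heatSemigroup {Ω : Type*} [MeasurableSpace Ω] {P : Measure Ω}
    [IsProbabilityMeasure P] {X : Ω → AddCircle p} {Z : Ω → ℝ} (hX : Measurable X)
    (hZ : Measurable Z) (hlaw : P.map Z = gaussianReal 0 h.toNNReal) (hind : IndepFun X Z P)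
    (hf : Continuous f) :
    ∫ ω, f (X ω + Z ω) ∂P = ∫ ω, heatSemigroup h f (X ω) ∂P := by
  have hg : Continuous fun q : AddCircle p × ℝ => f (q.1 + q.2) := by fun_prop
  calc ∫ ω, f (X ω + Z ω) ∂P
      = ∫ q, f (q.1 + q.2) ∂(P.map X).prod (gaussianReal 0 h.toNNReal) := by
        rw [← hlaw,
          ← (indepFun_iff_map_prod_eq_prod_map_map hX.aemeasurable hZ.aemeasurable).1 hind,
          integral_map (by fun_prop) hg.aestronglyMeasurable]
    _ = ∫ v, ∫ z, f (v + z) ∂gaussianReal 0 h.toNNReal ∂P.map X :=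
        integral_prod _ (integrable_comp_of_continuous hf
          (by fun_prop : Measurable fun q : AddCircle p × ℝ => q.1 + (q.2 : AddCircle p)))
    _ = ∫ v, heatSemigroup h f v ∂P.map X := by
        refine integral_congr_ae (ae_of_all _ fun v => ?_)
        dsimp only
        rw [gaussianReal_eq_map_sqrt_mul, integral_map (by fun_prop)
          (Continuous.aestronglyMeasurable (by fun_prop))]
        rfl
    _ = ∫ ω, heatSemigroup h f (X ω) ∂P :=
        integral_map hX.aemeasurable (continuous_heatSemigroup h hf).aestronglyMeasurable

end heatSemigroup

/-! ### Paths driven by a drift and a noise -/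

lemma hasDerivWithinAt_primitive_Ici {a : ℝ → ℝ} {b c s : ℝ} (ha : ContinuousOn a (Icc b c))
    (hs : s ∈ Ico b c) : HasDerivWithinAt (fun r => ∫ q in s..r, a q) (a s) (Ici s) s := by
  have hle : 𝓝[>] s ≤ 𝓝[Icc b c] s :=
    nhdsWithin_le_of_mem (mem_of_superset (Icc_mem_nhdsGT hs.2) (Icc_subset_Icc_left hs.1))
  have hmem : s ∈ Icc b c := Ico_subset_Icc_self hs
  exact intervalIntegral.integral_hasDerivWithinAt_right (t := Ioi s) .refl
    ((ha.stronglyMeasurableAtFilter_nhdsWithin measurableSet_Icc s).filter_mono hle)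
    ((ha s hmem).mono_left hle)

lemma tendsto_sub_div_of_hasStrictDerivAt {ι : Type*} {l : Filter ι} {g : ℝ → ℝ} {g' x a : ℝ}
    {u w c : ι → ℝ} (hg : HasStrictDerivAt g g' x) (hu : Tendsto u l (𝓝 x))
    (hw : Tendsto w l (𝓝 x)) (ha : Tendsto (fun i => (u i - w i) / c i) l (𝓝 a)) :
    Tendsto (fun i => (g (u i) - g (w i)) / c i) l (𝓝 (g' * a)) := by
  have hrem : (fun i => g (u i) - g (w i) - g' * (u i - w i)) =o[l] fun i => u i - w i := by
    simpa [Function.comp_def, mul_comm] using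
      hg.hasStrictFDerivAt.isLittleO.comp_tendsto (hu.prodMk_nhds hw)
  have hquot : (fun i => (g (u i) - g (w i) - g' * (u i - w i)) / c i) =o[l]
      fun i => (u i - w i) / c i := by
    simpa only [div_eq_mul_inv] using hrem.mul_isBigO (Asymptotics.isBigO_refl (fun i => (c i)⁻¹) l)
  have hzero := (Asymptotics.isLittleO_one_iff ℝ).1 (hquot.trans_isBigO (ha.isBigO_one ℝ))
  have hsum := hzero.add (ha.const_mul g')
  rw [zero_add] at hsum
  exact hsum.congr fun i => by ring

/-- The path `x` on the circle solves `dx = a dt + dβ` on `[0, T]`, in integrated form, for a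
continuous drift `a` and a continuous noise `β`. -/
structure IsDrivenPath {p : ℝ} (T : ℝ) (a β : ℝ → ℝ) (x : ℝ → AddCircle p) : Prop where
  continuousOn_drift : ContinuousOn a (Icc 0 T)
  continuousOn_noise : ContinuousOn β (Icc 0 T)
  eq_start_add : ∀ t ∈ Icc 0 T, x t = x 0 + ((∫ s in 0..t, a s) + (β t - β 0) : ℝ)

namespace IsDrivenPath

variable {p T C M : ℝ} {a β : ℝ → ℝ} {x : ℝ → AddCircle p} {f f' : AddCircle p → ℝ} {s t : ℝ}

lemma intervalIntegrable_drift (hx : IsDrivenPath T a β x) (hs : s ∈ Icc 0 T)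
    (ht : t ∈ Icc 0 T) : IntervalIntegrable a volume s t :=
  (hx.continuousOn_drift.mono (ordConnected_Icc.uIcc_subset hs ht)).intervalIntegrable

lemma eq_add (hx : IsDrivenPath T a β x) (hs : s ∈ Icc 0 T) (ht : t ∈ Icc 0 T) :
    x t = x s + ((∫ q in s..t, a q) + (β t - β s) : ℝ) := by
  have h0 : (0 : ℝ) ∈ Icc 0 T := ⟨le_rfl, hs.1.trans hs.2⟩
  rw [hx.eq_start_add t ht, hx.eq_start_add s hs, add_assoc, ← AddCircle.coe_add,
    ← intervalIntegral.integral_add_adjacent_intervals (hx.intervalIntegrable_drift h0 hs)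
      (hx.intervalIntegrable_drift hs ht)]
  congr 2
  ring

lemma continuousOn (hx : IsDrivenPath T a β x) : ContinuousOn x (Icc 0 T) := by
  have hprim : ContinuousOn (fun t => ∫ s in 0..t, a s) (Icc 0 T) :=
    (intervalIntegral.continuousOn_primitive hx.continuousOn_drift.integrableOn_Icc).congr
      fun t ht => intervalIntegral.integral_of_le ht.1
  exact (continuousOn_const.add ((AddCircle.continuous_mk' p).comp_continuousOn
    (hprim.add (hx.continuousOn_noise.sub continuousOn_const)))).congr hx.eq_start_add

lemma abs_sub_noise_step_le (hx : IsDrivenPath T a β x) (hC : ∀ s, |a s| ≤ C)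
    (hf : HasCircleDeriv f f') (hM : ∀ v, |f' v| ≤ M) (hs : s ∈ Icc 0 T) (ht : t ∈ Icc 0 T)
    (hst : s ≤ t) :
    |f (x t) - f (x s + (β t - β s : ℝ))| ≤ M * (C * (t - s)) := by
  have hM0 : 0 ≤ M := (abs_nonneg _).trans (hM 0)
  have hdrift : |∫ q in s..t, a q| ≤ C * (t - s) := by
    simpa [abs_of_nonneg (sub_nonneg.2 hst)] using
      intervalIntegral.norm_integral_le_of_norm_le_const (a := s) (b := t) (f := a)
        fun q _ => hC q
  have hsplit : x t = x s + (β t - β s : ℝ) + (∫ q in s..t, a q : ℝ) := by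
    rw [hx.eq_add hs ht, add_comm (∫ q in s..t, a q), AddCircle.coe_add, add_assoc]
  rw [hsplit]
  exact (hf.abs_add_sub_le hM _ _).trans (mul_le_mul_of_nonneg_left hdrift hM0)

lemma tendsto_sub_noise_step_div (hx : IsDrivenPath T a β x) (hf : HasCircleDeriv f f')
    (hf' : Continuous f') (hs : s ∈ Ico 0 T) :
    Tendsto (fun t => (f (x t) - f (x s + (β t - β s : ℝ))) / (t - s)) (𝓝[>] s)
      (𝓝 (f' (x s) * a s)) := by
  have hsT : s ∈ Icc 0 T := Ico_subset_Icc_self hs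
  have hIcc : Icc 0 T ∈ 𝓝[>] s := mem_of_superset (Icc_mem_nhdsGT hs.2) (Icc_subset_Icc_left hs.1)
  have hprim := (hasDerivWithinAt_primitive_Ici hx.continuousOn_drift hs).Ioi_of_Ici
  have hdrift : Tendsto (fun t => ∫ q in s..t, a q) (𝓝[>] s) (𝓝 0) := by
    simpa [ContinuousWithinAt] using hprim.continuousWithinAt
  have hnoise : Tendsto (fun t => β t - β s) (𝓝[>] s) (𝓝 0) := by
    simpa using
      ((hx.continuousOn_noise s hsT).mono_left (nhdsWithin_le_of_mem hIcc)).sub_const (β s)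
  have hslope : Tendsto (fun t => (∫ q in s..t, a q) / (t - s)) (𝓝[>] s) (𝓝 (a s)) := by
    simpa [slope_fun_def_field] using (hasDerivWithinAt_iff_tendsto_slope' (by simp)).1 hprim
  have hlim := tendsto_sub_div_of_hasStrictDerivAt (c := fun t => t - s)
    (hf.hasStrictDerivAt_add hf' (x s) 0) (by simpa using hdrift.add hnoise) hnoise
    (by simpa using hslope)
  simp only [QuotientAddGroup.mk_zero, add_zero] at hlim
  refine hlim.congr' ?_
  filter_upwards [hIcc] with t ht
  rw [hx.eq_add hsT ht]

end IsDrivenPath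

/-! ### Dynkin's formula -/

/-- `X` is an Itô process on the circle with bounded drift `a` and unit diffusion coefficient,
`dX = a dt + dB` on `[0, T]`. Instead of fixing a filtration, we record the only adaptedness needed:
`X s` is independent of the later increments of `B`. -/
structure IsUnitItoProcess {Ω : Type*} [MeasurableSpace Ω] {p : ℝ} (T : ℝ) (P : Measure Ω)
    (a B : Ω → ℝ → ℝ) (X : Ω → ℝ → AddCircle p) : Prop where
  measurable_drift : ∀ s, Measurable fun ω => a ω s
  measurable_state : ∀ s, Measurable fun ω => X ω s
  bounded_drift : ∃ C, ∀ ω s, |a ω s| ≤ C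
  brownian : IsStandardBM T P B
  indepFun_increment : ∀ s t, 0 ≤ s → s ≤ t → t ≤ T →
    IndepFun (fun ω => X ω s) (fun ω => B ω t - B ω s) P
  isDrivenPath : ∀ᵐ ω ∂P, IsDrivenPath T (a ω) (B ω) (X ω)

lemma IsStandardBM.measurable_increment {Ω : Type*} [MeasurableSpace Ω] {T : ℝ} {P : Measure Ω}
    {B : Ω → ℝ → ℝ} (hB : IsStandardBM T P B) (s t : ℝ) : Measurable fun ω => B ω t - B ω s :=
  (hB.2.2.1 t).sub (hB.2.2.1 s)

namespace IsUnitItoProcess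

variable {Ω : Type*} [MeasurableSpace Ω] {p T : ℝ} {P : Measure Ω} {a B : Ω → ℝ → ℝ}
  {X : Ω → ℝ → AddCircle p} {f f' f'' : AddCircle p → ℝ} {s t : ℝ}

lemma measurable_noise_step (hX : IsUnitItoProcess T P a B X) (s t : ℝ) :
    Measurable fun ω => X ω s + ((B ω t - B ω s : ℝ) : AddCircle p) :=
  (hX.measurable_state s).add (AddCircle.measurable_mk'.comp (hX.brownian.measurable_increment s t))

variable [Fact (0 < p)] [IsProbabilityMeasure P]

lemma integrable_mul_drift (hX : IsUnitItoProcess T P a B X) {g : AddCircle p → ℝ}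
    (hg : Continuous g) (s : ℝ) : Integrable (fun ω => g (X ω s) * a ω s) P :=
  have ⟨_, hC⟩ := hX.bounded_drift
  (integrable_comp_of_continuous hg (hX.measurable_state s)).mul_bdd
    (hX.measurable_drift s).aestronglyMeasurable (ae_of_all _ fun ω => hC ω s)

lemma integral_comp_noise_step (hX : IsUnitItoProcess T P a B X) (hf : Continuous f) (hs : 0 ≤ s)
    (hst : s ≤ t) (ht : t ≤ T) :
    ∫ ω, f (X ω s + (B ω t - B ω s : ℝ)) ∂P = ∫ ω, heatSemigroup (t - s) f (X ω s) ∂P :=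
  integral_comp_add_eq_integral_heatSemigroup (hX.measurable_state s)
    (hX.brownian.measurable_increment s t) (hX.brownian.2.2.2 s t hs hst ht).1
    (hX.indepFun_increment s t hs hst ht) hf

lemma tendsto_integral_noise_step_div (hX : IsUnitItoProcess T P a B X) (hf : HasCircleDeriv f f')
    (hf' : HasCircleDeriv f' f'') (hf'' : Continuous f'') (hs : s ∈ Ico 0 T) :
    Tendsto (fun t => ∫ ω, (f (X ω s + (B ω t - B ω s : ℝ)) - f (X ω s)) / (t - s) ∂P) (𝓝[>] s)
      (𝓝 (∫ ω, 1 / 2 * f'' (X ω s) ∂P)) := by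
  obtain ⟨M, hM⟩ := exists_abs_le_of_continuous hf''
  have hsub : Tendsto (fun t => t - s) (𝓝[>] s) (𝓝[>] 0) :=
    tendsto_nhdsWithin_iff.2 ⟨(Continuous.tendsto' (by fun_prop) s 0 (by simp)).mono_left
      nhdsWithin_le_nhds,
      by filter_upwards [self_mem_nhdsWithin] with t (ht : s < t) using sub_pos.2 ht⟩
  have hlim : Tendsto (fun t => ∫ ω, (heatSemigroup (t - s) f (X ω s) - f (X ω s)) / (t - s) ∂P)
      (𝓝[>] s) (𝓝 (∫ ω, 1 / 2 * f'' (X ω s) ∂P)) := by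
    refine tendsto_integral_filter_of_dominated_convergence (fun _ => M) (.of_forall fun t => ?_) ?_
      (integrable_const M) (ae_of_all _ fun ω =>
        (tendsto_heatSemigroup_sub_div hf hf' hM (X ω s)).comp hsub)
    · exact ((((continuous_heatSemigroup _ hf.continuous).sub hf.continuous).measurable.comp
        (hX.measurable_state s)).div_const _).aestronglyMeasurable
    · filter_upwards [self_mem_nhdsWithin] with t (ht : s < t)
      refine ae_of_all _ fun ω => ?_
      rw [Real.norm_eq_abs, abs_div, abs_of_pos (sub_pos.2 ht), div_le_iff₀ (sub_pos.2 ht)]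
      exact abs_heatSemigroup_sub_le hf hf' hM (sub_pos.2 ht).le _
  refine hlim.congr' ?_
  filter_upwards [Ioc_mem_nhdsGT hs.2] with t ht
  have hXs := hX.measurable_state s
  rw [integral_div, integral_div,
    integral_sub (integrable_comp_of_continuous (continuous_heatSemigroup _ hf.continuous) hXs)
      (integrable_comp_of_continuous hf.continuous hXs),
    integral_sub (integrable_comp_of_continuous hf.continuous (hX.measurable_noise_step s t))
      (integrable_comp_of_continuous hf.continuous hXs),
    hX.integral_comp_noise_step hf.continuous hs.1 ht.1.le ht.2]

lemma tendsto_integral_drift_step_div (hX : IsUnitItoProcess T P a B X) (hf : HasCircleDeriv f f')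
    (hf' : Continuous f') (hs : s ∈ Ico 0 T) :
    Tendsto (fun t => ∫ ω, (f (X ω t) - f (X ω s + (B ω t - B ω s : ℝ))) / (t - s) ∂P) (𝓝[>] s)
      (𝓝 (∫ ω, f' (X ω s) * a ω s ∂P)) := by
  obtain ⟨C, hC⟩ := hX.bounded_drift
  obtain ⟨M, hM⟩ := exists_abs_le_of_continuous hf'
  refine tendsto_integral_filter_of_dominated_convergence (fun _ => M * C) (.of_forall fun t => ?_)
    ?_ (integrable_const _)
    (hX.isDrivenPath.mono fun ω hω => hω.tendsto_sub_noise_step_div hf hf' hs)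
  · exact (((hf.continuous.measurable.comp (hX.measurable_state t)).sub
      (hf.continuous.measurable.comp
        (hX.measurable_noise_step s t))).div_const _).aestronglyMeasurable
  · filter_upwards [Ioc_mem_nhdsGT hs.2] with t ht
    filter_upwards [hX.isDrivenPath] with ω hω
    rw [Real.norm_eq_abs, abs_div, abs_of_pos (sub_pos.2 ht.1), div_le_iff₀ (sub_pos.2 ht.1),
      mul_assoc]
    exact hω.abs_sub_noise_step_le (hC ω) hf hM (Ico_subset_Icc_self hs)
      ⟨hs.1.trans ht.1.le, ht.2⟩ ht.1.le

lemma hasDerivWithinAt_integral_comp (hX : IsUnitItoProcess T P a B X) (hf : HasCircleDeriv f f')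
    (hf' : HasCircleDeriv f' f'') (hf'' : Continuous f'') (hs : s ∈ Ico 0 T) :
    HasDerivWithinAt (fun t => ∫ ω, f (X ω t) ∂P)
      (∫ ω, (1 / 2 * f'' (X ω s) + f' (X ω s) * a ω s) ∂P) (Ioi s) s := by
  have hint : ∀ Y : Ω → AddCircle p, Measurable Y → Integrable (fun ω => f (Y ω)) P := fun Y hY =>
    integrable_comp_of_continuous hf.continuous hY
  have hstep := hX.measurable_noise_step s
  have hXm := hX.measurable_state
  rw [hasDerivWithinAt_iff_tendsto_slope' (by simp), integral_add
    ((integrable_comp_of_continuous hf'' (hXm s)).const_mul _)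
    (hX.integrable_mul_drift hf'.continuous s)]
  refine ((hX.tendsto_integral_noise_step_div hf hf' hf'' hs).add
    (hX.tendsto_integral_drift_step_div hf hf'.continuous hs)).congr fun t => ?_
  rw [slope_def_field, integral_div, integral_div, ← add_div,
    integral_sub (hint _ (hstep t)) (hint _ (hXm s)),
    integral_sub (hint _ (hXm t)) (hint _ (hstep t))]
  ring

lemma continuousOn_integral_comp (hX : IsUnitItoProcess T P a B X) (hf : Continuous f) :
    ContinuousOn (fun t => ∫ ω, f (X ω t) ∂P) (Icc 0 T) := by
  obtain ⟨M, hM⟩ := exists_abs_le_of_continuous hf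
  exact continuousOn_of_dominated (bound := fun _ => M)
    (fun t _ => (hf.measurable.comp (hX.measurable_state t)).aestronglyMeasurable)
    (fun t _ => ae_of_all _ fun ω => hM _) (integrable_const _)
    (hX.isDrivenPath.mono fun ω hω => hf.comp_continuousOn hω.continuousOn)

lemma continuousOn_integral_mul_drift (hX : IsUnitItoProcess T P a B X) (hf : Continuous f) :
    ContinuousOn (fun t => ∫ ω, f (X ω t) * a ω t ∂P) (Icc 0 T) := by
  obtain ⟨C, hC⟩ := hX.bounded_drift
  obtain ⟨M, hM⟩ := exists_abs_le_of_continuous hf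
  refine continuousOn_of_dominated (bound := fun _ => M * C)
    (fun t _ => (hX.integrable_mul_drift hf t).aestronglyMeasurable)
    (fun t _ => ae_of_all _ fun ω => ?_) (integrable_const _)
    (hX.isDrivenPath.mono fun ω hω =>
      (hf.comp_continuousOn hω.continuousOn).mul hω.continuousOn_drift)
  rw [Real.norm_eq_abs, abs_mul]
  exact mul_le_mul (hM _) (hC ω t) (abs_nonneg _) ((abs_nonneg _).trans (hM 0))

theorem dynkin (hX : IsUnitItoProcess T P a B X) (hf : HasCircleDeriv f f')
    (hf' : HasCircleDeriv f' f'') (hf'' : Continuous f'') (ht : t ∈ Icc 0 T) :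
    (∫ ω, f (X ω t) ∂P) - ∫ ω, f (X ω 0) ∂P =
      ∫ s in 0..t, ∫ ω, (1 / 2 * f'' (X ω s) + f' (X ω s) * a ω s) ∂P := by
  have hsub : Icc 0 t ⊆ Icc 0 T := Icc_subset_Icc_right ht.2
  have hcont : ContinuousOn (fun s => ∫ ω, (1 / 2 * f'' (X ω s) + f' (X ω s) * a ω s) ∂P)
      (Icc 0 T) :=
    ((hX.continuousOn_integral_comp (hf''.const_mul (1 / 2))).add
      (hX.continuousOn_integral_mul_drift hf'.continuous)).congr fun s _ => integral_add
        ((integrable_comp_of_continuous hf'' (hX.measurable_state s)).const_mul _)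
        (hX.integrable_mul_drift hf'.continuous s)
  refine (intervalIntegral.integral_eq_sub_of_hasDeriv_right
    (f := fun s => ∫ ω, f (X ω s) ∂P) ?_ (fun s hs => ?_) ?_).symm
  · rw [uIcc_of_le ht.1]
    exact (hX.continuousOn_integral_comp hf.continuous).mono hsub
  · rw [min_eq_left ht.1, max_eq_right ht.1] at hs
    exact hX.hasDerivWithinAt_integral_comp hf hf' hf'' ⟨hs.1.le, hs.2.trans_le ht.2⟩
  · refine ContinuousOn.intervalIntegrable ?_
    rw [uIcc_of_le ht.1]
    exact hcont.mono hsub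

end IsUnitItoProcess

/-! ### Independence of the noise increments -/

/-- The explicit Euler scheme on the circle for the drift field `b`, started at `v`, along the time
grid `τ`; it sees the noise only through its values `w k` at the times `τ k`. -/
def eulerScheme {p : ℝ} (b : AddCircle p → ℝ → ℝ) (v : AddCircle p) (τ w : ℕ → ℝ) :
    ℕ → AddCircle p
  | 0 => v
  | k + 1 => eulerScheme b v τ w k +
      ((τ (k + 1) - τ k) * b (eulerScheme b v τ w k) (τ k) + (w (k + 1) - w k) : ℝ)

lemma measurable_eulerScheme {E : Type*} [MeasurableSpace E] {p : ℝ}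
    {b : E → AddCircle p → ℝ → ℝ} (hb : ∀ r, Measurable fun q : E × AddCircle p => b q.1 q.2 r)
    {v : E → AddCircle p} (hv : Measurable v) (τ : ℕ → ℝ) {w : E → ℕ → ℝ}
    (hw : ∀ k, Measurable fun e => w e k) (n : ℕ) :
    Measurable fun e => eulerScheme (b e) (v e) τ (w e) n := by
  induction n with
  | zero => exact hv
  | succ k ih =>
    exact ih.add (AddCircle.measurable_mk'.comp
      ((((hb (τ k)).comp (measurable_id.prodMk ih)).const_mul _).add ((hw (k + 1)).sub (hw k))))

section Euler

variable {p T : ℝ} {β : ℝ → ℝ} {x : ℝ → AddCircle p} {b : AddCircle p → ℝ → ℝ} {L : NNReal}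
  {s t ε : ℝ}

lemma norm_sub_euler_step_le (hx : IsDrivenPath T (fun r => b (x r) r) β x)
    (hb : ∀ r, LipschitzWith L fun v => b v r) (hs : s ∈ Icc 0 T) (ht : t ∈ Icc 0 T) (hst : s ≤ t)
    (hε : ∀ q ∈ Icc s t, |b (x q) q - b (x s) s| ≤ ε) (v : AddCircle p) :
    ‖x t - (v + ((t - s) * b v s + (β t - β s) : ℝ))‖ ≤
      (1 + L * (t - s)) * ‖x s - v‖ + ε * (t - s) := by
  have hsplit : x t - (v + ((t - s) * b v s + (β t - β s) : ℝ)) =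
      (x s - v) + ((∫ q in s..t, (b (x q) q - b v s) : ℝ) : AddCircle p) := by
    rw [hx.eq_add hs ht,
      intervalIntegral.integral_sub (hx.intervalIntegrable_drift hs ht) (by simp),
      intervalIntegral.integral_const, smul_eq_mul]
    simp only [AddCircle.coe_add, AddCircle.coe_sub]
    abel
  have hpoint : ∀ q ∈ uIoc s t, ‖b (x q) q - b v s‖ ≤ ε + L * ‖x s - v‖ := fun q hq => by
    rw [uIoc_of_le hst] at hq
    refine (norm_sub_le_norm_sub_add_norm_sub _ (b (x s) s) _).trans
      (add_le_add (hε q (Ioc_subset_Icc_self hq)) ?_)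
    simpa [dist_eq_norm] using (hb s).dist_le_mul (x s) v
  have hint := intervalIntegral.norm_integral_le_of_norm_le_const hpoint
  rw [abs_of_nonneg (sub_nonneg.2 hst)] at hint
  rw [hsplit]
  calc _ ≤ ‖x s - v‖ + ‖∫ q in s..t, (b (x q) q - b v s)‖ :=
        (norm_add_le _ _).trans (add_le_add_right (QuotientAddGroup.norm_mk_le_norm) _)
    _ ≤ ‖x s - v‖ + (ε + L * ‖x s - v‖) * (t - s) := by gcongr
    _ = _ := by ring

lemma norm_sub_eulerScheme_le (hx : IsDrivenPath T (fun r => b (x r) r) β x)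
    (hb : ∀ r, LipschitzWith L fun v => b v r) {τ : ℕ → ℝ} (hτ : Monotone τ) (hτ0 : τ 0 = 0)
    (hτT : ∀ k, τ k ≤ T) (hε0 : 0 ≤ ε)
    (hε : ∀ k, ∀ q ∈ Icc (τ k) (τ (k + 1)), |b (x q) q - b (x (τ k)) (τ k)| ≤ ε) (n : ℕ) :
    ‖x (τ n) - eulerScheme b (x 0) τ (β ∘ τ) n‖ ≤ ε * (τ n * Real.exp (L * τ n)) := by
  have hmem : ∀ k, τ k ∈ Icc 0 T := fun k => ⟨hτ0 ▸ hτ k.zero_le, hτT k⟩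
  have hle : ∀ k, 0 ≤ τ (k + 1) - τ k := fun k => sub_nonneg.2 (hτ k.le_succ)
  have hgronwall := discrete_gronwall (n₀ := 0) (c := fun k => L * (τ (k + 1) - τ k))
    (b := fun k => ε * (τ (k + 1) - τ k))
    (u := fun n => ‖x (τ n) - eulerScheme b (x 0) τ (β ∘ τ) n‖) (norm_nonneg _)
    (fun k _ => norm_sub_euler_step_le hx hb (hmem k) (hmem (k + 1)) (hτ k.le_succ) (hε k) _)
    (fun k _ => mul_nonneg L.2 (hle k)) (fun k _ => mul_nonneg hε0 (hle k)) n.zero_le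
  simp only [← Finset.mul_sum, ← Finset.range_eq_Ico, Finset.sum_range_sub, hτ0] at hgronwall
  simpa [eulerScheme, hτ0, mul_assoc] using hgronwall

/-- The grid of `[0, s]` with `N + 1` steps of equal length, constant equal to `s` from its last
point on so that every index is a valid time. -/
def uniformGrid (s : ℝ) (N k : ℕ) : ℝ := s * (min k (N + 1) : ℕ) / (N + 1)

lemma monotone_uniformGrid (hs : 0 ≤ s) (N : ℕ) : Monotone (uniformGrid s N) := fun j k hjk => by
  unfold uniformGrid
  gcongr

lemma uniformGrid_last (s : ℝ) (N : ℕ) : uniformGrid s N (N + 1) = s := by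
  have hN : (N + 1 : ℝ) ≠ 0 := by positivity
  simp [uniformGrid, hN]

lemma uniformGrid_mem_Icc (hs : 0 ≤ s) (N k : ℕ) : uniformGrid s N k ∈ Icc 0 s := by
  refine ⟨by unfold uniformGrid; positivity, ?_⟩
  exact (monotone_uniformGrid hs N (le_max_left k (N + 1))).trans_eq
    (by simpa [uniformGrid] using uniformGrid_last s N)

lemma uniformGrid_succ_sub_le (hs : 0 ≤ s) (N k : ℕ) :
    uniformGrid s N (k + 1) - uniformGrid s N k ≤ s / (N + 1) := by
  have hstep : ((min (k + 1) (N + 1) : ℕ) : ℝ) ≤ (min k (N + 1) : ℕ) + 1 := by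
    exact_mod_cast (by omega : min (k + 1) (N + 1) ≤ min k (N + 1) + 1)
  unfold uniformGrid
  rw [← sub_div, ← mul_sub]
  gcongr
  nlinarith

lemma tendsto_eulerScheme (hx : IsDrivenPath T (fun r => b (x r) r) β x)
    (hb : ∀ r, LipschitzWith L fun v => b v r) (hs : s ∈ Icc 0 T) :
    Tendsto (fun N => eulerScheme b (x 0) (uniformGrid s N) (β ∘ uniformGrid s N) (N + 1)) atTop
      (𝓝 (x s)) := by
  have herr : (fun N => ‖x s - eulerScheme b (x 0) (uniformGrid s N) (β ∘ uniformGrid s N) (N + 1)‖)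
      =o[atTop] fun _ => s * Real.exp (L * s) := by
    refine Asymptotics.IsLittleO.of_bound fun ε hε => ?_
    obtain ⟨η, hη, hmod⟩ := Metric.uniformContinuousOn_iff.1
      (isCompact_Icc.uniformContinuousOn_of_continuous hx.continuousOn_drift) ε hε
    have hmesh : ∀ᶠ N : ℕ in atTop, s / (N + 1) < η := by
      simpa using (tendsto_const_div_atTop_nhds_zero_nat s).comp (tendsto_add_atTop_nat 1)
        |>.eventually_lt_const hη
    filter_upwards [hmesh] with N hN
    have hgrid : ∀ k, uniformGrid s N k ∈ Icc 0 T := fun k =>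
      Icc_subset_Icc_right hs.2 (uniformGrid_mem_Icc hs.1 N k)
    have hbound := norm_sub_eulerScheme_le hx hb (monotone_uniformGrid hs.1 N)
      (by simp [uniformGrid]) (fun k => (hgrid k).2) hε.le (fun k q hq => ?_) (N + 1)
    · rw [uniformGrid_last] at hbound
      rwa [norm_norm, Real.norm_of_nonneg (mul_nonneg hs.1 (Real.exp_nonneg _))]
    · refine (hmod q ⟨(hgrid k).1.trans hq.1, hq.2.trans (hgrid _).2⟩ _ (hgrid k) ?_).le
      rw [Real.dist_eq, abs_of_nonneg (sub_nonneg.2 hq.1)]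
      linarith [uniformGrid_succ_sub_le hs.1 N k, hq.2]
  have hzero := (Asymptotics.isLittleO_one_iff ℝ).1 (herr.trans_isBigO
    (Asymptotics.isBigO_const_const _ (one_ne_zero : (1 : ℝ) ≠ 0) _))
  exact tendsto_iff_norm_sub_tendsto_zero.2 (hzero.congr fun N => norm_sub_rev _ _)

end Euler

section Independence

variable {Ω : Type*} [MeasurableSpace Ω] {P : Measure Ω}

lemma indepFun_prodMk_left [IsProbabilityMeasure P] {α β γ : Type*} [MeasurableSpace α]
    [MeasurableSpace β] [MeasurableSpace γ] {X : Ω → α} {Y : Ω → β} {Z : Ω → γ} (hX : Measurable X)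
    (hY : Measurable Y) (hZ : Measurable Z) (hXYZ : IndepFun X (fun ω => (Y ω, Z ω)) P)
    (hYZ : IndepFun Y Z P) : IndepFun (fun ω => (X ω, Y ω)) Z P := by
  have hXY : IndepFun X Y P := hXYZ.comp measurable_id measurable_fst
  rw [indepFun_iff_map_prod_eq_prod_map_map (by fun_prop) (by fun_prop)] at hXYZ hYZ hXY ⊢
  have := Measure.isProbabilityMeasure_map (μ := P) hX.aemeasurable
  have := Measure.isProbabilityMeasure_map (μ := P) hY.aemeasurable
  have := Measure.isProbabilityMeasure_map (μ := P) hZ.aemeasurable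
  apply MeasurableEquiv.prodAssoc.map_measurableEquiv_injective
  rw [hXY, Measure.prodAssoc_prod, ← hYZ, ← hXYZ, Measure.map_map (by fun_prop) (by fun_prop)]
  rfl

lemma indepFun_of_tendsto_ae {E F G : Type*} [MeasurableSpace E] [TopologicalSpace F]
    [PolishSpace F] [Nonempty F] [MeasurableSpace F] [BorelSpace F] [MeasurableSpace G]
    {Q : Ω → E} {X : Ω → F} {Z : Ω → G} {Φ : ℕ → E → F} (hΦ : ∀ n, Measurable (Φ n))
    (hQZ : IndepFun Q Z P)
    (hlim : ∀ᵐ ω ∂P, Tendsto (fun n => Φ n (Q ω)) atTop (𝓝 (X ω))) : IndepFun X Z P := by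
  have hΨ : Measurable fun e => limUnder atTop fun n => Φ n e :=
    (StronglyMeasurable.limUnder fun n => (hΦ n).stronglyMeasurable).measurable
  exact (hQZ.comp hΨ measurable_id).congr (hlim.mono fun ω hω => hω.limUnder_eq) .rfl

lemma IsStandardBM.indepFun_past_increment {T : ℝ} {E : Type*} [MeasurableSpace E]
    [IsProbabilityMeasure P] {B : Ω → ℝ → ℝ} (hB : IsStandardBM T P B) {Y : Ω → E}
    (hY : Measurable Y) (hYB : IndepFun Y B P) {s t : ℝ} (hs : 0 ≤ s) (hst : s ≤ t) (ht : t ≤ T) :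
    IndepFun (fun ω => (Y ω, fun r : Icc 0 s => B ω r)) (fun ω => B ω t - B ω s) P :=
  indepFun_prodMk_left hY (measurable_pi_lambda _ fun r => hB.2.2.1 r) (hB.measurable_increment s t)
    (hYB.comp (ψ := fun β : ℝ → ℝ => (fun r : Icc 0 s => β r, β t - β s)) measurable_id
      (by fun_prop)) (hB.2.2.2 s t hs hst ht).2.symm

lemma IsStandardBM.indepFun_state_increment {α : Type*} [MeasurableSpace α] {p T : ℝ}
    [Fact (0 < p)] [IsProbabilityMeasure P] {U : Ω → α} {B : Ω → ℝ → ℝ} {X : Ω → ℝ → AddCircle p}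
    {b : α → AddCircle p → ℝ → ℝ} {L : NNReal} (hB : IsStandardBM T P B) (hU : Measurable U)
    (hX0 : Measurable fun ω => X ω 0) (hind : IndepFun (fun ω => (U ω, X ω 0)) B P)
    (hbm : ∀ r, Measurable fun q : α × AddCircle p => b q.1 q.2 r)
    (hbL : ∀ u r, LipschitzWith L fun v => b u v r)
    (hpath : ∀ᵐ ω ∂P, IsDrivenPath T (fun r => b (U ω) (X ω r) r) (B ω) (X ω))
    {s t : ℝ} (hs : 0 ≤ s) (hst : s ≤ t) (ht : t ≤ T) :
    IndepFun (fun ω => X ω s) (fun ω => B ω t - B ω s) P := by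
  let past (ω : Ω) : (α × AddCircle p) × (Icc 0 s → ℝ) := ((U ω, X ω 0), fun r => B ω r)
  let approx (N : ℕ) (q : (α × AddCircle p) × (Icc 0 s → ℝ)) : AddCircle p :=
    eulerScheme (b q.1.1) q.1.2 (uniformGrid s N)
      (fun k => q.2 ⟨uniformGrid s N k, uniformGrid_mem_Icc hs N k⟩) (N + 1)
  have happrox : ∀ N, Measurable (approx N) := fun N =>
    measurable_eulerScheme (b := fun q : (α × AddCircle p) × (Icc 0 s → ℝ) => b q.1.1)
      (fun r => (hbm r).comp (measurable_fst.fst.fst.prodMk measurable_snd)) measurable_fst.snd _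
      (fun k => (measurable_pi_apply _).comp measurable_snd) _
  have hpast : IndepFun past (fun ω => B ω t - B ω s) P :=
    hB.indepFun_past_increment (hU.prodMk hX0) hind hs hst ht
  have hlim : ∀ᵐ ω ∂P, Tendsto (fun N => approx N (past ω)) atTop (𝓝 (X ω s)) :=
    hpath.mono fun ω hω => tendsto_eulerScheme hω (hbL (U ω)) ⟨hs, hst.trans ht⟩
  exact indepFun_of_tendsto_ae happrox hpast hlim

end Independence

/-! ### The graphon interaction -/

section Disintegration

variable {α E Ω : Type*} [MeasurableSpace α] [MeasurableSpace E] [MeasurableSpace Ω]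
  {P : Measure Ω} {ℓ : Measure α} [IsFiniteMeasure ℓ] {κ : Kernel α E} [IsMarkovKernel κ]
  {U : Ω → α} {Y : Ω → E}

lemma map_prodMk_eq_compProd (hU : Measurable U) (hY : Measurable Y)
    (h : ∀ S, MeasurableSet S → ∀ A, MeasurableSet A →
      P {ω | U ω ∈ S ∧ Y ω ∈ A} = ∫⁻ y in S, κ y A ∂ℓ) :
    P.map (fun ω => (U ω, Y ω)) = ℓ ⊗ₘ κ := by
  refine (Measure.ext_prod fun {S A} hS hA => ?_).symm
  rw [Measure.map_apply (hU.prodMk hY) (hS.prod hA), Measure.compProd_apply_prod hS hA,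
    ← h S hS A hA]
  rfl

lemma integral_comp_prodMk_of_map_eq_compProd (hU : Measurable U) (hY : Measurable Y)
    (hlaw : P.map (fun ω => (U ω, Y ω)) = ℓ ⊗ₘ κ) {g : α × E → ℝ} (hg : Integrable g (ℓ ⊗ₘ κ)) :
    ∫ ω, g (U ω, Y ω) ∂P = ∫ x, ∫ v, g (x, v) ∂κ x ∂ℓ := by
  rw [← Measure.integral_compProd hg, ← hlaw,
    integral_map (hU.prodMk hY).aemeasurable (hlaw ▸ hg.aestronglyMeasurable)]

end Disintegration

/-- The mean interaction felt in state `v` by a particle with label `x`, when labels are distributed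
according to `ℓ` and the state of a particle with label `y` has law `κ y`. -/
def graphonField {α E : Type*} [MeasurableSpace α] [MeasurableSpace E] (ℓ : Measure α)
    (W : α → α → ℝ) (κ : Kernel α E) (Γ : E → E → ℝ) (x : α) (v : E) : ℝ :=
  ∫ y, W x y * ∫ u, Γ v u ∂κ y ∂ℓ

section GraphonField

variable {α E Ω : Type*} [MeasurableSpace α] [MeasurableSpace E] [MeasurableSpace Ω]
  {P : Measure Ω} {ℓ : Measure α} [IsProbabilityMeasure ℓ] {κ : Kernel α E} [IsMarkovKernel κ]
  {W : α → α → ℝ} {Γ : E → E → ℝ} {C : NNReal} {M : ℝ}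

lemma measurable_integral_kernel_section (hΓ : Measurable (Function.uncurry Γ)) :
    Measurable fun q : E × α => ∫ u, Γ q.1 u ∂κ q.2 :=
  (StronglyMeasurable.integral_kernel_prod_right (κ := κ.prodMkLeft E)
    (f := fun (q : E × α) u => Γ q.1 u)
    (hΓ.comp (measurable_fst.fst.prodMk measurable_snd)).stronglyMeasurable).measurable

lemma abs_integral_kernel_section_le (hM : ∀ v u, |Γ v u| ≤ M) (v : E) (y : α) :
    |∫ u, Γ v u ∂κ y| ≤ M := by
  simpa using norm_integral_le_of_norm_le_const (f := Γ v) (ae_of_all (κ y) (hM v))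

lemma measurable_graphonField (hW : Measurable (Function.uncurry W))
    (hΓ : Measurable (Function.uncurry Γ)) :
    Measurable (Function.uncurry (graphonField ℓ W κ Γ)) := by
  have hinner : Measurable fun q : (α × E) × α => W q.1.1 q.2 * ∫ u, Γ q.1.2 u ∂κ q.2 :=
    (hW.comp (measurable_fst.fst.prodMk measurable_snd)).mul
      ((measurable_integral_kernel_section hΓ).comp (measurable_fst.snd.prodMk measurable_snd))
  exact hinner.stronglyMeasurable.integral_prod_right'.measurable

lemma abs_graphonField_le (hC : ∀ x y, |W x y| ≤ C) (hM : ∀ v u, |Γ v u| ≤ M) (x : α) (v : E) :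
    |graphonField ℓ W κ Γ x v| ≤ C * M := by
  have hbound : ∀ y, ‖W x y * ∫ u, Γ v u ∂κ y‖ ≤ C * M := fun y => by
    rw [norm_mul]
    exact mul_le_mul (hC x y) (abs_integral_kernel_section_le hM v y) (norm_nonneg _) C.2
  simpa [graphonField] using norm_integral_le_of_norm_le_const (ae_of_all ℓ hbound)

lemma integrable_interaction {m : Measure (α × E)} [IsFiniteMeasure m]
    (hW : Measurable (Function.uncurry W)) (hC : ∀ x y, |W x y| ≤ C)
    (hΓ : Measurable (Function.uncurry Γ)) (hM : ∀ v u, |Γ v u| ≤ M) (x : α) (v : E) :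
    Integrable (fun q : α × E => W x q.1 * Γ v q.2) m := by
  refine .of_bound (((hW.comp (measurable_const.prodMk measurable_fst)).mul
    (hΓ.comp (measurable_const.prodMk measurable_snd))).aestronglyMeasurable) (C * M)
    (ae_of_all _ fun q => ?_)
  rw [norm_mul]
  exact mul_le_mul (hC _ _) (hM _ _) (norm_nonneg _) C.2

lemma graphonField_eq_integral_compProd (hW : Measurable (Function.uncurry W))
    (hC : ∀ x y, |W x y| ≤ C) (hΓ : Measurable (Function.uncurry Γ)) (hM : ∀ v u, |Γ v u| ≤ M)
    (x : α) (v : E) : graphonField ℓ W κ Γ x v = ∫ q, W x q.1 * Γ v q.2 ∂(ℓ ⊗ₘ κ) := by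
  rw [Measure.integral_compProd (integrable_interaction hW hC hΓ hM x v)]
  simp only [graphonField, integral_const_mul]

lemma graphonField_eq_integral {U : Ω → α} {Y : Ω → E} (hU : Measurable U) (hY : Measurable Y)
    (hlaw : P.map (fun ω => (U ω, Y ω)) = ℓ ⊗ₘ κ) (hW : Measurable (Function.uncurry W))
    (hC : ∀ x y, |W x y| ≤ C) (hΓ : Measurable (Function.uncurry Γ)) (hM : ∀ v u, |Γ v u| ≤ M)
    (x : α) (v : E) : graphonField ℓ W κ Γ x v = ∫ ω, W x (U ω) * Γ v (Y ω) ∂P := by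
  have hint := integrable_interaction (m := ℓ ⊗ₘ κ) hW hC hΓ hM x v
  rw [graphonField_eq_integral_compProd hW hC hΓ hM, Measure.integral_compProd hint,
    ← integral_comp_prodMk_of_map_eq_compProd hU hY hlaw hint]

lemma lipschitzWith_graphonField [PseudoMetricSpace E] {K : NNReal}
    (hW : Measurable (Function.uncurry W)) (hC : ∀ x y, |W x y| ≤ C)
    (hΓ : Measurable (Function.uncurry Γ)) (hM : ∀ v u, |Γ v u| ≤ M)
    (hK : ∀ u, LipschitzWith K fun v => Γ v u) (x : α) :
    LipschitzWith (C * K) (graphonField ℓ W κ Γ x) := by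
  refine .of_dist_le_mul fun v w => ?_
  have hbound : ∀ q : α × E, ‖W x q.1 * Γ v q.2 - W x q.1 * Γ w q.2‖ ≤ C * (K * dist v w) :=
    fun q => by
      rw [← mul_sub, norm_mul, ← dist_eq_norm (Γ v q.2)]
      exact mul_le_mul (hC _ _) ((hK q.2).dist_le_mul v w) dist_nonneg C.2
  rw [graphonField_eq_integral_compProd hW hC hΓ hM, graphonField_eq_integral_compProd hW hC hΓ hM,
    dist_eq_norm, ← integral_sub (integrable_interaction hW hC hΓ hM x v)
      (integrable_interaction hW hC hΓ hM x w)]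
  simpa [mul_assoc] using norm_integral_le_of_norm_le_const (ae_of_all (ℓ ⊗ₘ κ) hbound)

lemma integral_mul_graphonField {ν : Measure E} [IsFiniteMeasure ν] {g : E → ℝ} {D : ℝ}
    (hg : Measurable g) (hD : ∀ v, |g v| ≤ D) (hW : Measurable (Function.uncurry W))
    (hC : ∀ x y, |W x y| ≤ C) (hΓ : Measurable (Function.uncurry Γ)) (hM : ∀ v u, |Γ v u| ≤ M)
    (x : α) : ∫ v, g v * graphonField ℓ W κ Γ x v ∂ν =
      ∫ y, W x y * ∫ v, g v * ∫ u, Γ v u ∂κ y ∂ν ∂ℓ := by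
  have hint : Integrable (Function.uncurry fun (v : E) (y : α) => g v * (W x y * ∫ u, Γ v u ∂κ y))
      (ν.prod ℓ) := by
    refine .of_bound (C := D * (C * M)) (Measurable.aestronglyMeasurable ?_)
      (ae_of_all _ fun q => ?_)
    · exact (hg.comp measurable_fst).mul ((hW.comp (measurable_const.prodMk measurable_snd)).mul
        (measurable_integral_kernel_section hΓ))
    · simp only [Function.uncurry, norm_mul]
      exact mul_le_mul (hD _) (mul_le_mul (hC _ _) (abs_integral_kernel_section_le hM _ _)
        (norm_nonneg _) C.2) (by positivity) ((abs_nonneg _).trans (hD q.1))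
  simp only [graphonField, ← integral_const_mul]
  rw [integral_integral_swap (by simpa only [← integral_const_mul] using hint)]
  simp only [integral_const_mul, mul_left_comm (g _)]

end GraphonField

/-! ### Graphon mean-field diffusions -/

/-- A solution `θ` of the nonlinear equation with drift `F`, interaction `Γ` and graphon `W`, driven
by `B`: labels `U` have an arbitrary law `ℓ`, states live on a circle of arbitrary length, and `κ s`
is a regular conditional distribution of `θ s` given `U`. -/
structure IsGraphonDiffusion {Ω α : Type*} [MeasurableSpace Ω] [MeasurableSpace α] {p : ℝ} (T : ℝ)
    (P : Measure Ω) (ℓ : Measure α) (F : AddCircle p → ℝ) (Γ : AddCircle p → AddCircle p → ℝ)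
    (W : α → α → ℝ) (U : Ω → α) (B : Ω → ℝ → ℝ) (θ : Ω → ℝ → AddCircle p)
    (κ : ℝ → Kernel α (AddCircle p)) : Prop where
  measurable_label : Measurable U
  measurable_state : ∀ s, Measurable fun ω => θ ω s
  continuousOn_state : ∀ᵐ ω ∂P, ContinuousOn (θ ω) (Icc 0 T)
  brownian : IsStandardBM T P B
  indepFun_noise : IndepFun (fun ω => (U ω, θ ω 0)) B P
  map_prodMk : ∀ s ∈ Icc 0 T, P.map (fun ω => (U ω, θ ω s)) = ℓ ⊗ₘ κ s
  equation : ∀ᵐ ω ∂P, ∀ t ∈ Icc 0 T, θ ω t = θ ω 0 + ((∫ s in 0..t, F (θ ω s)) +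
    (∫ s in 0..t, graphonField ℓ W (κ s) Γ (U ω) (θ ω s)) + B ω t : ℝ)

namespace IsGraphonDiffusion

variable {Ω α : Type*} [MeasurableSpace Ω] [MeasurableSpace α] {p T : ℝ} [Fact (0 < p)]
  {P : Measure Ω} {ℓ : Measure α} [IsProbabilityMeasure ℓ]
  {F : AddCircle p → ℝ} {Γ : AddCircle p → AddCircle p → ℝ} {W : α → α → ℝ} {U : Ω → α}
  {B : Ω → ℝ → ℝ} {θ : Ω → ℝ → AddCircle p} {κ : ℝ → Kernel α (AddCircle p)}
  [∀ s, IsMarkovKernel (κ s)] {C KF KΓ : NNReal} {s : ℝ}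

lemma integral_state_mul_graphonField (hθ : IsGraphonDiffusion T P ℓ F Γ W U B θ κ)
    {g : AddCircle p → ℝ} (hg : Continuous g) (hΓ : Continuous (Function.uncurry Γ))
    (hW : Measurable (Function.uncurry W)) (hC : ∀ x y, |W x y| ≤ C) (hs : s ∈ Icc 0 T) :
    ∫ ω, g (θ ω s) * graphonField ℓ W (κ s) Γ (U ω) (θ ω s) ∂P =
      ∫ x, ∫ y, W x y * ∫ v, g v * ∫ u, Γ v u ∂κ s y ∂κ s x ∂ℓ ∂ℓ := by
  obtain ⟨D, hD⟩ := exists_abs_le_of_continuous hg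
  obtain ⟨M, hMΓ⟩ := exists_abs_le_of_continuous hΓ
  have hM : ∀ v u, |Γ v u| ≤ M := fun v u => hMΓ (v, u)
  have hint : Integrable (fun q : α × AddCircle p => g q.2 * graphonField ℓ W (κ s) Γ q.1 q.2)
      (ℓ ⊗ₘ κ s) := by
    refine (integrable_comp_of_continuous hg measurable_snd).mul_bdd
      (measurable_graphonField hW hΓ.measurable).aestronglyMeasurable
      (ae_of_all _ fun q => abs_graphonField_le hC hM q.1 q.2)
  rw [integral_comp_prodMk_of_map_eq_compProd hθ.measurable_label (hθ.measurable_state s)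
    (hθ.map_prodMk s hs) hint]
  exact integral_congr_ae (ae_of_all _ fun x =>
    integral_mul_graphonField hg.measurable hD hW hC hΓ.measurable hM x)

variable [IsProbabilityMeasure P]

lemma continuousOn_graphonField (hθ : IsGraphonDiffusion T P ℓ F Γ W U B θ κ)
    (hΓ : Continuous (Function.uncurry Γ)) (hW : Measurable (Function.uncurry W))
    (hC : ∀ x y, |W x y| ≤ C) {v : ℝ → AddCircle p} (hv : ContinuousOn v (Icc 0 T)) (x : α) :
    ContinuousOn (fun s => graphonField ℓ W (κ s) Γ x (v s)) (Icc 0 T) := by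
  obtain ⟨M, hM⟩ := exists_abs_le_of_continuous hΓ
  have hpair : ∀ s, Measurable fun ω => (U ω, θ ω s) := fun s =>
    hθ.measurable_label.prodMk (hθ.measurable_state s)
  have hexp : ContinuousOn (fun s => ∫ ω, W x (U ω) * Γ (v s) (θ ω s) ∂P) (Icc 0 T) := by
    refine continuousOn_of_dominated (bound := fun _ => C * M) (fun s _ => ?_)
      (fun s _ => ae_of_all _ fun ω => ?_) (integrable_const _)
      (hθ.continuousOn_state.mono fun ω hω =>
        continuousOn_const.mul (hΓ.comp_continuousOn (hv.prodMk hω)))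
    · exact (((hW.comp (measurable_const.prodMk measurable_fst)).mul
        (hΓ.measurable.comp (measurable_const.prodMk measurable_snd))).comp
        (hpair s)).aestronglyMeasurable
    · rw [norm_mul]
      exact mul_le_mul (hC _ _) (hM (_, _)) (norm_nonneg _) C.2
  exact hexp.congr fun s hs => graphonField_eq_integral hθ.measurable_label (hθ.measurable_state s)
    (hθ.map_prodMk s hs) hW hC hΓ.measurable (fun v u => hM (v, u)) x (v s)

lemma isDrivenPath (hθ : IsGraphonDiffusion T P ℓ F Γ W U B θ κ) (hF : Continuous F)
    (hΓ : Continuous (Function.uncurry Γ)) (hW : Measurable (Function.uncurry W))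
    (hC : ∀ x y, |W x y| ≤ C) :
    ∀ᵐ ω ∂P, IsDrivenPath T
      (fun s => F (θ ω s) + graphonField ℓ W (κ s) Γ (U ω) (θ ω s)) (B ω) (θ ω) := by
  filter_upwards [hθ.continuousOn_state, hθ.equation] with ω hcont heq
  have hcF : ContinuousOn (fun s => F (θ ω s)) (Icc 0 T) := hF.comp_continuousOn hcont
  have hcΓ := hθ.continuousOn_graphonField hΓ hW hC hcont (U ω)
  refine ⟨hcF.add hcΓ, hθ.brownian.2.1 ω, fun t ht => ?_⟩
  have hsub : uIcc 0 t ⊆ Icc 0 T := uIcc_of_le ht.1 ▸ Icc_subset_Icc_right ht.2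
  rw [heq t ht, intervalIntegral.integral_add (hcF.mono hsub).intervalIntegrable
    (hcΓ.mono hsub).intervalIntegrable, hθ.brownian.1 ω, sub_zero]

theorem isUnitItoProcess (hθ : IsGraphonDiffusion T P ℓ F Γ W U B θ κ) (hF : LipschitzWith KF F)
    (hΓ : LipschitzWith KΓ (Function.uncurry Γ)) (hW : Measurable (Function.uncurry W))
    (hC : ∀ x y, |W x y| ≤ C) :
    IsUnitItoProcess T P (fun ω s => F (θ ω s) + graphonField ℓ W (κ s) Γ (U ω) (θ ω s)) B θ := by
  obtain ⟨MF, hMF⟩ := exists_abs_le_of_continuous hF.continuous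
  obtain ⟨MΓ, hMΓ⟩ := exists_abs_le_of_continuous hΓ.continuous
  have hM : ∀ v u, |Γ v u| ≤ MΓ := fun v u => hMΓ (v, u)
  have hmeas : ∀ s, Measurable fun q : α × AddCircle p =>
      F q.2 + graphonField ℓ W (κ s) Γ q.1 q.2 := fun s =>
    (hF.continuous.measurable.comp measurable_snd).add
      (measurable_graphonField hW hΓ.continuous.measurable)
  have hLip : ∀ x s, LipschitzWith (KF + C * KΓ) fun v => F v + graphonField ℓ W (κ s) Γ x v :=
    fun x s => hF.add (lipschitzWith_graphonField hW hC hΓ.continuous.measurable hM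
      (fun u => mul_one KΓ ▸ hΓ.comp (LipschitzWith.prodMk_right u)) x)
  have hpath := hθ.isDrivenPath hF.continuous hΓ.continuous hW hC
  exact
    { measurable_drift := fun s =>
        (hmeas s).comp (hθ.measurable_label.prodMk (hθ.measurable_state s))
      measurable_state := hθ.measurable_state
      bounded_drift := ⟨MF + C * MΓ, fun ω s => (abs_add_le _ _).trans
        (add_le_add (hMF _) (abs_graphonField_le hC hM _ _))⟩
      brownian := hθ.brownian
      indepFun_increment := fun s t => hθ.brownian.indepFun_state_increment hθ.measurable_label
        (hθ.measurable_state 0) hθ.indepFun_noise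
        (b := fun x v s => F v + graphonField ℓ W (κ s) Γ x v) hmeas hLip hpath
      isDrivenPath := hpath }

end IsGraphonDiffusion

theorem mean_field_fokker_planck_general {Ω α : Type*} [MeasurableSpace Ω] [MeasurableSpace α]
    {p T : ℝ} [Fact (0 < p)] {P : Measure Ω} [IsProbabilityMeasure P] {ℓ : Measure α}
    [IsProbabilityMeasure ℓ] {F : AddCircle p → ℝ} {Γ : AddCircle p → AddCircle p → ℝ}
    {W : α → α → ℝ} {U : Ω → α} {B : Ω → ℝ → ℝ} {θ : Ω → ℝ → AddCircle p}
    {κ : ℝ → Kernel α (AddCircle p)} [∀ s, IsMarkovKernel (κ s)] {C KF KΓ : NNReal}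
    (hF : LipschitzWith KF F) (hΓ : LipschitzWith KΓ (Function.uncurry Γ))
    (hW : Measurable (Function.uncurry W)) (hC : ∀ x y, |W x y| ≤ C)
    (hθ : IsGraphonDiffusion T P ℓ F Γ W U B θ κ) {f f' f'' : AddCircle p → ℝ}
    (hf : HasCircleDeriv f f') (hf' : HasCircleDeriv f' f'') (hf'' : Continuous f'') {t : ℝ}
    (ht : t ∈ Icc 0 T) :
    (∫ v, f v ∂P.map fun ω => θ ω t) - ∫ v, f v ∂P.map (fun ω => θ ω 0) =
      ∫ s in 0..t, ((∫ v, (1 / 2 * f'' v + f' v * F v) ∂P.map fun ω => θ ω s) +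
        ∫ x, ∫ y, W x y * ∫ v, f' v * ∫ u, Γ v u ∂κ s y ∂κ s x ∂ℓ ∂ℓ) := by
  have hmap : ∀ {g : AddCircle p → ℝ}, Continuous g → ∀ s,
      ∫ v, g v ∂P.map (fun ω => θ ω s) = ∫ ω, g (θ ω s) ∂P := fun hg s =>
    integral_map (hθ.measurable_state s).aemeasurable hg.aestronglyMeasurable
  have hIto := hθ.isUnitItoProcess hF hΓ hW hC
  have hgen : Continuous fun v => 1 / 2 * f'' v + f' v * F v :=
    (hf''.const_mul _).add (hf'.continuous.mul hF.continuous)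
  rw [hmap hf.continuous, hmap hf.continuous, hIto.dynkin hf hf' hf'' ht]
  refine intervalIntegral.integral_congr fun s hs => ?_
  rw [uIcc_of_le ht.1] at hs
  have hfield : Integrable (fun ω => f' (θ ω s) * graphonField ℓ W (κ s) Γ (U ω) (θ ω s)) P := by
    refine ((hIto.integrable_mul_drift hf'.continuous s).sub (integrable_comp_of_continuous
      (hf'.continuous.mul hF.continuous) (hθ.measurable_state s))).congr (ae_of_all _ fun ω => ?_)
    simp [mul_add]
  rw [hmap hgen, ← hθ.integral_state_mul_graphonField hf'.continuous hΓ.continuous hW hC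
    ⟨hs.1, hs.2.trans ht.2⟩, ← integral_add
      (integrable_comp_of_continuous hgen (hθ.measurable_state s)) hfield]
  simp only [mul_add, add_assoc]

/-! ### The nonlinear equation on the torus -/

instance : IsProbabilityMeasure (volume.restrict I01) := ⟨by simp⟩

namespace IsMeanFieldSolution

variable {Ω : Type*} [MeasurableSpace Ω] {T : ℝ} {P : Measure Ω} {F : Torus → ℝ}
  {Γ : Torus → Torus → ℝ} {W : ℝ → ℝ → ℝ} {U : Ω → ℝ} {θ0 : Ω → Torus} {B : Ω → ℝ → ℝ}
  {θ : Ω → ℝ → Torus} {μker : ℝ → ℝ → Measure Torus} {μ0 : Measure Torus}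

/-- The conditional laws `y ↦ μ^y_s` of a solution at time `s`, bundled as a kernel. -/
def kernel (hθ : IsMeanFieldSolution T P F Γ W U θ0 B θ μker) (s : ℝ) : Kernel ℝ Torus :=
  ⟨fun y => μker y s, hθ.kerMeas s⟩

instance (hθ : IsMeanFieldSolution T P F Γ W U θ0 B θ μker) (s : ℝ) :
    IsMarkovKernel (hθ.kernel s) :=
  ⟨fun y => hθ.kerProb y s⟩

lemma ae_eq_start (hθ : IsMeanFieldSolution T P F Γ W U θ0 B θ μker) (hB : IsStandardBM T P B)
    (hT : 0 ≤ T) : (fun ω => θ ω 0) =ᵐ[P] θ0 := by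
  filter_upwards [hθ.sde] with ω hω
  simpa [drift, hB.1 ω] using hω 0 ⟨le_rfl, hT⟩

lemma isGraphonDiffusion (hθ : IsMeanFieldSolution T P F Γ W U θ0 B θ μker)
    (hdata : MeanFieldData T P μ0 U θ0 B) (hT : 0 ≤ T) :
    IsGraphonDiffusion T P (volume.restrict I01) F Γ W U B θ hθ.kernel := by
  obtain ⟨hU, -, -, -, hB, -, hind⟩ := hdata
  have hstart := hθ.ae_eq_start hB hT
  refine ⟨hU, hθ.meas, ae_of_all _ hθ.cont, hB,
    hind.congr (hstart.mono fun ω hω => Prod.ext rfl hω.symm) .rfl, fun s hs => ?_, ?_⟩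
  · refine map_prodMk_eq_compProd hU (hθ.meas s) fun S hS A hA => ?_
    rw [hθ.disint s hs S hS A hA, Measure.restrict_restrict hS]
    rfl
  · filter_upwards [hθ.sde, hstart] with ω hω hω0 t ht
    rw [hω t ht, hω0, drift, integral_Icc_eq_integral_Ioc, integral_Icc_eq_integral_Ioc,
      ← intervalIntegral.integral_of_le ht.1, ← intervalIntegral.integral_of_le ht.1]
    rfl

end IsMeanFieldSolution

/-- Proposition 2.1, Fokker–Planck equation: if `θ` solves the nonlinear
equation for the labeled graphon `W` with data `(U, θ0, B)`, `μ̄_t = Law(θ_t)` and `μ^x_t`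
is a regular conditional distribution of `θ_t` given `U = x`, then `μ̄` solves the
graphon-weighted nonlinear Fokker–Planck equation weakly: for every `C²` function
`f : 𝕋 → ℝ` and every `t ∈ [0,T]`,
`∫ f dμ̄_t − ∫ f dμ̄₀ = ∫₀ᵗ [ ∫ (½ f'' + f' F) dμ̄_s
  + ∫_{I×I} W(x,y) ( ∫∫ f'(θ) Γ(θ,u) μ^y_s(du) μ^x_s(dθ) ) dy dx ] ds`. -/
theorem mean_field_fokker_planck
    {Ω : Type*} [MeasurableSpace Ω] (T : ℝ) (hT : 0 < T)
    (P : Measure Ω) [IsProbabilityMeasure P]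
    (F : Torus → ℝ) (Γ : Torus → Torus → ℝ) (hF : BddLip F) (hΓ : BddLip2 Γ)
    (W : ℝ → ℝ → ℝ) (hW : IsGraphon W)
    (μ0 : Measure Torus) (hμ0 : IsProbabilityMeasure μ0)
    (U : Ω → ℝ) (θ0 : Ω → Torus) (B : Ω → ℝ → ℝ)
    (hdata : MeanFieldData T P μ0 U θ0 B)
    (θ : Ω → ℝ → Torus) (μker : ℝ → ℝ → Measure Torus)
    (hθ : IsMeanFieldSolution T P F Γ W U θ0 B θ μker) :
    ∀ (f f' f'' : Torus → ℝ), Continuous f'' →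
      (∀ r : ℝ, HasDerivAt (fun s : ℝ => f (s : Torus)) (f' (r : Torus)) r) →
      (∀ r : ℝ, HasDerivAt (fun s : ℝ => f' (s : Torus)) (f'' (r : Torus)) r) →
      ∀ t ∈ Set.Icc (0:ℝ) T,
        (∫ u, f u ∂(P.map (fun ω => θ ω t))) - (∫ u, f u ∂μ0) =
          ∫ s in Set.Icc (0:ℝ) t,
            ((∫ u, ((1/2) * f'' u + f' u * F u) ∂(P.map (fun ω => θ ω s))) +
              ∫ x in I01, ∫ y in I01, W x y *
                ∫ v, (f' v * ∫ u, Γ v u ∂(μker y s)) ∂(μker x s)) := by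
  intro f f' f'' hf'' hf hf' t ht
  obtain ⟨⟨KF, hF⟩, -⟩ := hF
  obtain ⟨⟨KΓ, hΓ⟩, -⟩ := hΓ
  have hW1 : ∀ x y, |W x y| ≤ (1 : NNReal) := fun x y =>
    (abs_of_nonneg (hW.2.1 x y).1).trans_le (hW.2.1 x y).2
  have hμ0law : P.map (fun ω => θ ω 0) = μ0 :=
    (Measure.map_congr (hθ.ae_eq_start hdata.2.2.2.2.1 hT.le)).trans hdata.2.2.2.1
  rw [integral_Icc_eq_integral_Ioc, ← intervalIntegral.integral_of_le ht.1, ← hμ0law]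
  exact mean_field_fokker_planck_general hF hΓ hW.1 hW1 (hθ.isGraphonDiffusion hdata hT.le)
    hf hf' hf'' ht
end
end

section
/- (Relabeling invariance.) Let φ : I → I be a measure-preserving bijection and let θ be a solution of the nonlinear system for the labeled graphon W with initial datum θ₀ and driving processes B. Define ψ^x := θ^{φ(x)}, the relabeled initial datum x ↦ θ^{φ(x)}_0, the relabeled drivers x ↦ B^{φ(x)}, and the relabeled graphon W^φ(x,y) := W(φ(x), φ(y)). Then ψ is a solution of the nonlinear system for W^φ with the relabeled initial datum and drivers, and the mixtures of path laws coincide: ∫_I Law(θ^x) dx = ∫_I Law(ψ^x) dx as measures on C([0,T],𝕋). -/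
open MeasureTheory ProbabilityTheory Real Set Filter Topology

noncomputable section

/-- The law at time `s` of the process `θ` under `P`. -/
def pathLaw {Ω : Type*} [MeasurableSpace Ω] (P : Measure Ω) (θ : Ω → ℝ → Torus) (s : ℝ) :
    Measure Torus := P.map (fun ω => θ ω s)

/-- `θ : I × Ω → C([0,T],𝕋)` (jointly measurable, continuous in time) is a solution of the
labeled nonlinear system for the labeled graphon `W` with initial datum `θ0` and driving
processes `B`: writing `μ^y_s` for the law of `θ^y_s`, for a.e. `x ∈ I`, `P`-a.s., for all
`t ∈ [0,T]`,
`θ^x_t = θ^x_0 + π( ∫₀ᵗ F(θ^x_s) ds + ∫₀ᵗ ∫_I W(x,y) (∫_𝕋 Γ(θ^x_s,u) μ^y_s(du)) dy ds + B^x_t )`. -/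
structure IsLabeledSolution {Ω : Type*} [MeasurableSpace Ω] (T : ℝ) (P : Measure Ω)
    (F : Torus → ℝ) (Γ : Torus → Torus → ℝ) (W : ℝ → ℝ → ℝ)
    (θ0 : ℝ → Ω → Torus) (B : ℝ → Ω → ℝ → ℝ) (θ : ℝ → Ω → ℝ → Torus) : Prop where
  jointMeas : Measurable (fun p : ℝ × Ω => θ p.1 p.2)
  cont : ∀ x ω, ContinuousOn (θ x ω) (Set.Icc 0 T)
  sde : ∀ᵐ x ∂(volume.restrict I01), ∀ᵐ ω ∂P, ∀ t ∈ Set.Icc (0:ℝ) T,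
    θ x ω t = θ0 x ω +
      ((drift F Γ W (fun y s => pathLaw P (θ y) s) x (θ x ω) t + B x ω t : ℝ) : Torus)

/-- A measure-preserving bijection of `I = [0,1]` (with Lebesgue measure). -/
def IsMPBij (φ : ℝ → ℝ) : Prop :=
  MeasureTheory.MeasurePreserving φ (volume.restrict I01) (volume.restrict I01) ∧
    Set.BijOn φ I01 I01

/-!
The label `y` enters the drift only through an integral over `I`, so the change of variables
`y ↦ φ y` identifies the drift of `ψ^x = θ^{φ(x)}` for `W^φ` with the drift of `θ^{φ(x)}` for `W`.
The equation for `ψ^x` is then the equation for `θ` at the label `φ x`, which holds for a.e. `x`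
because `φ` pulls null sets back to null sets. The same change of variables, applied to the
measure-valued map `x ↦ Law(θ^x)`, gives the equality of the mixtures.
-/

section MeasurePreserving

variable {α β E : Type*} [MeasurableSpace α] [MeasurableSpace β] {μ : Measure α} {ν : Measure β}
  {φ : α → β}

theorem integral_comp_of_measurePreserving [NormedAddCommGroup E] [NormedSpace ℝ E]
    (hφ : MeasurePreserving φ μ ν) {g : β → E} (hg : AEStronglyMeasurable g ν) :
    ∫ x, g (φ x) ∂μ = ∫ y, g y ∂ν := by
  rw [← hφ.map_eq] at hg ⊢
  exact (integral_map hφ.aemeasurable hg).symm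

theorem bind_comp_of_measurePreserving [MeasurableSpace E] (hφ : MeasurePreserving φ μ ν)
    {κ : β → Measure E} (hκ : AEMeasurable κ ν) :
    μ.bind (fun x => κ (φ x)) = ν.bind κ := by
  rw [← hφ.map_eq] at hκ ⊢
  exact congrArg Measure.join (hκ.map_map_of_aemeasurable hφ.aemeasurable).symm

end MeasurePreserving

section ParametrizedLaw

variable {α Ω E G : Type*} [MeasurableSpace α] [MeasurableSpace Ω] [MeasurableSpace E]
  {P : Measure Ω} [SFinite P] {f : α → Ω → E}

theorem measurable_map_of_uncurry (hf : Measurable (Function.uncurry f)) :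
    Measurable (fun a => P.map (f a)) := by
  have map_section (a : α) : P.map (f a) = (P.map (Prod.mk a)).map (Function.uncurry f) :=
    (Measure.map_map hf measurable_prodMk_left).symm
  simp only [map_section]
  exact (Measure.measurable_map _ hf).comp Measurable.map_prodMk_left

theorem stronglyMeasurable_integral_map_of_uncurry [NormedAddCommGroup G] [NormedSpace ℝ G]
    (hf : Measurable (Function.uncurry f)) {g : E → G} (hg : StronglyMeasurable g) :
    StronglyMeasurable (fun a => ∫ u, g u ∂(P.map (f a))) := by
  have integral_section (a : α) : ∫ u, g u ∂(P.map (f a)) = ∫ ω, g (f a ω) ∂P :=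
    integral_map hf.of_uncurry_left.aemeasurable hg.aestronglyMeasurable
  simp only [integral_section]
  exact (hg.comp_measurable hf).integral_prod_right'

end ParametrizedLaw

theorem drift_relabel {F : Torus → ℝ} {Γ : Torus → Torus → ℝ} {W : ℝ → ℝ → ℝ}
    {μ : ℝ → ℝ → Measure Torus} {φ : ℝ → ℝ}
    (hφ : MeasurePreserving φ (volume.restrict I01) (volume.restrict I01))
    (hW : ∀ x, AEStronglyMeasurable (W x) (volume.restrict I01))
    (hμ : ∀ a s, AEStronglyMeasurable (fun y => ∫ u, Γ a u ∂(μ y s)) (volume.restrict I01))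
    (x : ℝ) (p : ℝ → Torus) (t : ℝ) :
    drift F Γ (fun x y => W (φ x) (φ y)) (fun y => μ (φ y)) x p t = drift F Γ W μ (φ x) p t := by
  have interaction_eq (s : ℝ) :
      ∫ y in I01, W (φ x) (φ y) * ∫ u, Γ (p s) u ∂(μ (φ y) s) =
        ∫ y in I01, W (φ x) y * ∫ u, Γ (p s) u ∂(μ y s) :=
    integral_comp_of_measurePreserving hφ ((hW (φ x)).mul (hμ (p s) s))
  simp only [drift, interaction_eq]

namespace IsLabeledSolution

variable {Ω : Type*} [MeasurableSpace Ω] {T : ℝ} {P : Measure Ω} [SFinite P]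
  {F : Torus → ℝ} {Γ : Torus → Torus → ℝ} {W : ℝ → ℝ → ℝ} {φ : ℝ → ℝ}
  {θ0 : ℝ → Ω → Torus} {B : ℝ → Ω → ℝ → ℝ} {θ : ℝ → Ω → ℝ → Torus}

theorem stronglyMeasurable_integral_pathLaw (hθ : IsLabeledSolution T P F Γ W θ0 B θ)
    {g : Torus → ℝ} (hg : StronglyMeasurable g) (s : ℝ) :
    StronglyMeasurable (fun y => ∫ u, g u ∂(pathLaw P (θ y) s)) :=
  stronglyMeasurable_integral_map_of_uncurry (f := fun y ω => θ y ω s)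
    ((measurable_pi_apply s).comp hθ.jointMeas) hg

theorem relabel (hθ : IsLabeledSolution T P F Γ W θ0 B θ)
    (hφ : MeasurePreserving φ (volume.restrict I01) (volume.restrict I01))
    (hW : ∀ x, AEStronglyMeasurable (W x) (volume.restrict I01))
    (hΓ : ∀ a, StronglyMeasurable (Γ a)) :
    IsLabeledSolution T P F Γ (fun x y => W (φ x) (φ y))
      (fun x => θ0 (φ x)) (fun x => B (φ x)) (fun x => θ (φ x)) where
  jointMeas := hθ.jointMeas.comp (hφ.measurable.prodMap measurable_id)
  cont x := hθ.cont (φ x)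
  sde := by
    have drift_eq := drift_relabel (F := F) hφ hW fun a s =>
      (hθ.stronglyMeasurable_integral_pathLaw (hΓ a) s).aestronglyMeasurable
    filter_upwards [hφ.quasiMeasurePreserving.ae hθ.sde] with x sde_at_label
    simpa only [drift_eq] using sde_at_label

theorem bind_map_relabel (hθ : IsLabeledSolution T P F Γ W θ0 B θ)
    (hφ : MeasurePreserving φ (volume.restrict I01) (volume.restrict I01)) :
    (volume.restrict I01).bind (fun x => P.map (θ (φ x))) =
      (volume.restrict I01).bind (fun x => P.map (θ x)) :=
  bind_comp_of_measurePreserving hφ (measurable_map_of_uncurry hθ.jointMeas).aemeasurable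

end IsLabeledSolution

theorem BddLip2.stronglyMeasurable {Γ : Torus → Torus → ℝ} (hΓ : BddLip2 Γ) (a : Torus) :
    StronglyMeasurable (Γ a) := by
  obtain ⟨⟨K, hK⟩, -⟩ := hΓ
  exact (hK.continuous.comp (Continuous.prodMk_right a)).stronglyMeasurable

theorem IsGraphon.stronglyMeasurable {W : ℝ → ℝ → ℝ} (hW : IsGraphon W) (x : ℝ) :
    StronglyMeasurable (W x) :=
  (hW.1.comp measurable_prodMk_left).stronglyMeasurable

theorem relabeling_invariance_general
    {Ω : Type*} [MeasurableSpace Ω] {T : ℝ} {P : Measure Ω} [SFinite P]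
    {F : Torus → ℝ} {Γ : Torus → Torus → ℝ} (hΓ : ∀ a, StronglyMeasurable (Γ a))
    {W : ℝ → ℝ → ℝ} (hW : ∀ x, AEStronglyMeasurable (W x) (volume.restrict I01))
    {φ : ℝ → ℝ} (hφ : MeasurePreserving φ (volume.restrict I01) (volume.restrict I01))
    {θ0 : ℝ → Ω → Torus} {B : ℝ → Ω → ℝ → ℝ} {θ : ℝ → Ω → ℝ → Torus}
    (hθ : IsLabeledSolution T P F Γ W θ0 B θ) :
    IsLabeledSolution T P F Γ (fun x y => W (φ x) (φ y))
        (fun x => θ0 (φ x)) (fun x => B (φ x)) (fun x => θ (φ x)) ∧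
      (volume.restrict I01).bind (fun x => P.map (θ x)) =
        (volume.restrict I01).bind (fun x => P.map (θ (φ x))) :=
  ⟨hθ.relabel hφ hW hΓ, (hθ.bind_map_relabel hφ).symm⟩

/-- relabeling invariance: if `φ` is a measure-preserving bijection of
`I` and `θ` solves the nonlinear system for `W`, then `ψ^x := θ^{φ(x)}` solves the nonlinear
system for the relabeled graphon `W^φ(x,y) = W(φ(x),φ(y))` with the relabeled initial datum
and drivers, and the mixtures of path laws coincide:
`∫_I Law(θ^x) dx = ∫_I Law(ψ^x) dx`. -/
theorem relabeling_invariance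
    {Ω : Type*} [MeasurableSpace Ω] (T : ℝ) (hT : 0 < T)
    (P : Measure Ω) [IsProbabilityMeasure P]
    (F : Torus → ℝ) (Γ : Torus → Torus → ℝ) (hF : BddLip F) (hΓ : BddLip2 Γ)
    (W : ℝ → ℝ → ℝ) (hW : IsGraphon W)
    (φ : ℝ → ℝ) (hφ : IsMPBij φ)
    (θ0 : ℝ → Ω → Torus) (B : ℝ → Ω → ℝ → ℝ) (θ : ℝ → Ω → ℝ → Torus)
    (hθ : IsLabeledSolution T P F Γ W θ0 B θ) :
    IsLabeledSolution T P F Γ (fun x y => W (φ x) (φ y))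
        (fun x => θ0 (φ x)) (fun x => B (φ x)) (fun x => θ (φ x)) ∧
      (volume.restrict I01).bind (fun x => P.map (θ x)) =
        (volume.restrict I01).bind (fun x => P.map (θ (φ x))) :=
  relabeling_invariance_general hΓ.stronglyMeasurable
    (fun x => (hW.stronglyMeasurable x).aestronglyMeasurable) hφ.1 hθ
end
end
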